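/- arXiv:1003.1874 — 3 statements merged into one kernel-verified Lean document; each statement's English description precedes it below -/
import Mathlib

section
/- Von Neumann entropy inequality for separable states: let ρ_i^A be n×n density matrices, ρ_i^B be m×m density matrices (i in a finite index set), and p_i ≥ 0 with Σ p_i = 1. Let ρ = Σ_i p_i (ρ_i^A ⊗ ρ_i^B) (Kronecker products), and let ρ^A = Σ_i p_i ρ_i^A and ρ^B = Σ_i p_i ρ_i^B be its reduced density matrices. Then S(ρ) ≥ S(ρ^A) and S(ρ) ≥ S(ρ^B). -/
open Matrix Kronecker
open scoped ComplexOrder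

noncomputable section

/-- The von Neumann entropy `S(σ) = −Σ λᵢ ln λᵢ` of a Hermitian matrix, computed from its
eigenvalues (with the convention `0·ln 0 = 0`, automatic since `Real.log 0 = 0`);
set to `0` on non-Hermitian matrices. -/
def vN {n : Type*} [Fintype n] [DecidableEq n] (σ : Matrix n n ℂ) : ℝ :=
  @dite _ σ.IsHermitian (Classical.dec _)
    (fun h => -∑ i, h.eigenvalues i * Real.log (h.eigenvalues i)) (fun _ => 0)

/-- A density matrix: Hermitian positive-semidefinite with trace 1. -/
def IsDensity {n : Type*} [Fintype n] (σ : Matrix n n ℂ) : Prop :=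
  σ.PosSemidef ∧ σ.trace = 1

open scoped MatrixOrder Matrix.Norms.L2Operator Topology

section TraceInequality

variable {n N : Type*} [Fintype n] [DecidableEq n] [Fintype N] [DecidableEq N]

lemma Matrix.PosSemidef.trace_mul_nonneg {A B : Matrix n n ℂ} (hA : A.PosSemidef)
    (hB : B.PosSemidef) : 0 ≤ (A * B).trace := by
  obtain ⟨X, rfl⟩ := CStarAlgebra.nonneg_iff_eq_star_mul_self.mp hA.nonneg
  rw [star_eq_conjTranspose, mul_assoc, trace_mul_comm]
  exact (hB.mul_mul_conjTranspose_same X).trace_nonneg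

lemma Matrix.IsHermitian.trace_cfc {A : Matrix n n ℂ} (hA : A.IsHermitian) (f : ℝ → ℝ) :
    (cfc f A).trace = ((∑ i, f (hA.eigenvalues i) : ℝ) : ℂ) := by
  rw [hA.cfc_eq, IsHermitian.cfc, Unitary.conjStarAlgAut_apply, trace_mul_comm, ← mul_assoc]
  simp

lemma Matrix.continuousOn_spectrum_real (A : Matrix n n ℂ) (f : ℝ → ℝ) :
    ContinuousOn f (spectrum ℝ A) :=
  (finite_real_spectrum (A := A)).continuousOn f

lemma Matrix.IsHermitian.trace_mul_cfc {A : Matrix n n ℂ} (hA : A.IsHermitian) (f : ℝ → ℝ) :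
    (A * cfc f A).trace = ((∑ i, hA.eigenvalues i * f (hA.eigenvalues i) : ℝ) : ℂ) := by
  have h : A * cfc f A = cfc (fun x => x * f x) A := by
    rw [cfc_mul (fun x => x) f A (A.continuousOn_spectrum_real _) (A.continuousOn_spectrum_real _),
      cfc_id' ℝ A hA.isSelfAdjoint]
  rw [h, hA.trace_cfc]

/-- The shifted logarithm `x ↦ log (x + ε)` is operator monotone on positive semidefinite
matrices. -/
lemma Matrix.PosSemidef.cfc_log_add_le {A B : Matrix n n ℂ} (hA : A.PosSemidef) (hAB : A ≤ B)
    {ε : ℝ} (hε : 0 < ε) :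
    cfc (fun x => Real.log (x + ε)) A ≤ cfc (fun x => Real.log (x + ε)) B := by
  have key {C : Matrix n n ℂ} (hC : C.IsHermitian) :
      cfc (fun x => Real.log (x + ε)) C = CFC.log (C + algebraMap ℝ _ ε) := by
    rw [cfc_comp' Real.log (fun x => x + ε) C
      ((finite_real_spectrum.image _).continuousOn _) (C.continuousOn_spectrum_real _)
      hC.isSelfAdjoint,
      cfc_add_const ε (fun x => x) C (C.continuousOn_spectrum_real _) hC.isSelfAdjoint,
      cfc_id' ℝ C hC.isSelfAdjoint, CFC.log]
  have hB : B.PosSemidef := (hA.nonneg.trans hAB).posSemidef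
  rw [key hA.1, key hB.1]
  refine CFC.log_le_log (by gcongr) (isStrictlyPositive_iff_posDef.mpr ?_)
  refine PosDef.posSemidef_add hA ?_
  exact isStrictlyPositive_iff_posDef.mp (isStrictlyPositive_algebraMap hε)

lemma tendsto_mul_log_add (x : ℝ) :
    Filter.Tendsto (fun ε => x * Real.log (x + ε)) (𝓝[>] 0) (𝓝 (x * Real.log x)) := by
  rcases eq_or_ne x 0 with rfl | hx
  · simp
  · have h : ContinuousAt (fun ε => x * Real.log (x + ε)) 0 :=
      continuousAt_const.mul ((continuousAt_const.add continuousAt_id).log (by simpa using hx))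
    simpa using h.tendsto.mono_left nhdsWithin_le_nhds

lemma vN_eq_of_isHermitian {σ : Matrix n n ℂ} (h : σ.IsHermitian) :
    vN σ = -∑ i, h.eigenvalues i * Real.log (h.eigenvalues i) := by
  simp [vN, h]

/-- If `σ` is the restriction of the state `ρ` along a star homomorphism `φ` and `ρ ≤ φ σ`,
then the entropy of `σ` is at most that of `ρ`. -/
lemma vN_le_of_le_map (φ : Matrix n n ℂ →⋆ₐ[ℂ] Matrix N N ℂ) {σ : Matrix n n ℂ}
    {ρ : Matrix N N ℂ} (hσ : σ.PosSemidef) (hρ : ρ.PosSemidef) (hle : ρ ≤ φ σ)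
    (htr : ∀ X, (ρ * φ X).trace = (σ * X).trace) : vN σ ≤ vN ρ := by
  rw [vN_eq_of_isHermitian hσ.1, vN_eq_of_isHermitian hρ.1, neg_le_neg_iff]
  refine le_of_tendsto_of_tendsto
    (tendsto_finsetSum _ fun i _ => tendsto_mul_log_add (hρ.1.eigenvalues i))
    (tendsto_finsetSum _ fun i _ => tendsto_mul_log_add (hσ.1.eigenvalues i)) ?_
  filter_upwards [self_mem_nhdsWithin] with ε hε
  have hφ : Continuous φ := φ.toAlgHom.toLinearMap.continuous_of_finiteDimensional
  have hmap : φ (cfc (fun x => Real.log (x + ε)) σ) = cfc (fun x => Real.log (x + ε)) (φ σ) :=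
    StarAlgHom.map_cfc φ _ σ (σ.continuousOn_spectrum_real _) hφ hσ.1.isSelfAdjoint
      (hσ.1.isSelfAdjoint.map φ)
  have h := hρ.trace_mul_nonneg (le_iff.mp (hρ.cfc_log_add_le hle hε))
  rw [mul_sub, trace_sub, sub_nonneg, ← hmap, htr,
    hρ.1.trace_mul_cfc (fun x => Real.log (x + ε)),
    hσ.1.trace_mul_cfc (fun x => Real.log (x + ε))] at h
  exact_mod_cast h

end TraceInequality

section Kronecker

variable (n m : Type*) [Fintype n] [DecidableEq n] [Fintype m] [DecidableEq m]

/-- The embedding `X ↦ X ⊗ 1` as a star algebra homomorphism. -/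
def kroneckerOneHom : Matrix n n ℂ →⋆ₐ[ℂ] Matrix (n × m) (n × m) ℂ where
  toFun X := X ⊗ₖ 1
  map_one' := one_kronecker_one
  map_mul' X Y := by rw [← mul_kronecker_mul, one_mul]
  map_zero' := zero_kronecker _
  map_add' X Y := add_kronecker _ _ _
  commutes' r := by
    rw [Algebra.algebraMap_eq_smul_one, Algebra.algebraMap_eq_smul_one, smul_kronecker,
      one_kronecker_one]
  map_star' X := by simp [star_eq_conjTranspose, conjTranspose_kronecker]

/-- The embedding `Y ↦ 1 ⊗ Y` as a star algebra homomorphism. -/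
def oneKroneckerHom : Matrix m m ℂ →⋆ₐ[ℂ] Matrix (n × m) (n × m) ℂ where
  toFun Y := 1 ⊗ₖ Y
  map_one' := one_kronecker_one
  map_mul' X Y := by rw [← mul_kronecker_mul, one_mul]
  map_zero' := kronecker_zero _
  map_add' X Y := kronecker_add _ _ _
  commutes' r := by
    rw [Algebra.algebraMap_eq_smul_one, Algebra.algebraMap_eq_smul_one, kronecker_smul,
      one_kronecker_one]
  map_star' X := by simp [star_eq_conjTranspose, conjTranspose_kronecker]

end Kronecker

lemma IsDensity.one_sub_posSemidef {n : Type*} [Fintype n] [DecidableEq n] {σ : Matrix n n ℂ}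
    (h : IsDensity σ) : (1 - σ).PosSemidef := by
  rw [← le_iff, CFC.le_one_iff (R := ℝ) σ h.1.1.isSelfAdjoint,
    h.1.1.spectrum_real_eq_range_eigenvalues]
  rintro _ ⟨i, rfl⟩
  have hsum : ∑ j, h.1.1.eigenvalues j = 1 :=
    Complex.ofReal_injective
      (by simpa using h.1.1.trace_eq_sum_eigenvalues.symm.trans h.2)
  rw [← hsum]
  exact Finset.single_le_sum (fun j _ => h.1.eigenvalues_nonneg j) (Finset.mem_univ i)

lemma Matrix.posSemidef_sum_ofReal_smul {n ι : Type*} [Fintype n] [Fintype ι] {p : ι → ℝ}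
    {M : ι → Matrix n n ℂ} (hp : ∀ i, 0 ≤ p i) (hM : ∀ i, (M i).PosSemidef) :
    (∑ i, (p i : ℂ) • M i).PosSemidef :=
  posSemidef_sum _ fun i _ => (hM i).smul (by exact_mod_cast hp i)

/-- for a separable state `ρ = Σᵢ pᵢ ρᵢ^A ⊗ ρᵢ^B` with reduced density matrices
`ρ^A = Σᵢ pᵢ ρᵢ^A` and `ρ^B = Σᵢ pᵢ ρᵢ^B`, the von Neumann entropy satisfies
`S(ρ) ≥ S(ρ^A)` and `S(ρ) ≥ S(ρ^B)`. -/
theorem stmt9 (n m k : ℕ)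
    (ρA : Fin k → Matrix (Fin n) (Fin n) ℂ) (ρB : Fin k → Matrix (Fin m) (Fin m) ℂ)
    (p : Fin k → ℝ)
    (hA : ∀ i, IsDensity (ρA i)) (hB : ∀ i, IsDensity (ρB i))
    (hp : ∀ i, 0 ≤ p i) (hps : ∑ i, p i = 1) :
    vN (∑ i, (p i : ℂ) • ρA i) ≤ vN (∑ i, (p i : ℂ) • (ρA i ⊗ₖ ρB i)) ∧
      vN (∑ i, (p i : ℂ) • ρB i) ≤ vN (∑ i, (p i : ℂ) • (ρA i ⊗ₖ ρB i)) := by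
  have hρ := posSemidef_sum_ofReal_smul hp fun i => (hA i).1.kronecker (hB i).1
  constructor
  · refine vN_le_of_le_map (kroneckerOneHom (Fin n) (Fin m))
      (posSemidef_sum_ofReal_smul hp fun i => (hA i).1) hρ ?_ fun X => ?_
    · have h := posSemidef_sum_ofReal_smul hp fun i =>
        (hA i).1.kronecker (hB i).one_sub_posSemidef
      have hsub (i) : ρA i ⊗ₖ (1 - ρB i) = kroneckerOneHom _ _ (ρA i) - ρA i ⊗ₖ ρB i :=
        eq_sub_of_add_eq (by rw [← kronecker_add, sub_add_cancel]; rfl)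
      simpa only [le_iff, map_sum, map_smul, hsub, smul_sub, Finset.sum_sub_distrib] using h
    · have htr (i) : ((ρA i ⊗ₖ ρB i) * kroneckerOneHom _ _ X).trace = (ρA i * X).trace := by
        change ((ρA i ⊗ₖ ρB i) * (X ⊗ₖ 1)).trace = _
        rw [← mul_kronecker_mul, trace_kronecker, mul_one, (hB i).2, mul_one]
      simp only [Finset.sum_mul, trace_sum, smul_mul_assoc, trace_smul, htr]
  · refine vN_le_of_le_map (oneKroneckerHom (Fin n) (Fin m))
      (posSemidef_sum_ofReal_smul hp fun i => (hB i).1) hρ ?_ fun X => ?_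
    · have h := posSemidef_sum_ofReal_smul hp fun i =>
        (hA i).one_sub_posSemidef.kronecker (hB i).1
      have hsub (i) : (1 - ρA i) ⊗ₖ ρB i = oneKroneckerHom _ _ (ρB i) - ρA i ⊗ₖ ρB i :=
        eq_sub_of_add_eq (by rw [← add_kronecker, sub_add_cancel]; rfl)
      simpa only [le_iff, map_sum, map_smul, hsub, smul_sub, Finset.sum_sub_distrib] using h
    · have htr (i) : ((ρA i ⊗ₖ ρB i) * oneKroneckerHom _ _ X).trace = (ρB i * X).trace := by
        change ((ρA i ⊗ₖ ρB i) * (1 ⊗ₖ X)).trace = _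
        rw [← mul_kronecker_mul, trace_kronecker, mul_one, (hA i).2, one_mul]
      simp only [Finset.sum_mul, trace_sum, smul_mul_assoc, trace_smul, htr]
end
end

section
/- Schmidt decomposition theorem: for every coefficient matrix c : Matrix (Fin n) (Fin m) ℂ with Σ_{i,j} |c_{ij}|² = 1 there exist a natural number k with k ≤ min(n, m), nonnegative reals p : Fin k → ℝ with Σ_l p_l = 1, and orthonormal families u : Fin k → (Fin n → ℂ) and v : Fin k → (Fin m → ℂ) (orthonormal with respect to the standard Hermitian inner products), such that c_{ij} = Σ_{l} √(p_l) · u_l(i) · v_l(j) for all i, j. -/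
open Matrix

open scoped ComplexOrder in
/-- The spectral theorem for `cᴴ * c`: the columns of `c * U` are pairwise orthogonal and their
squared norms are the eigenvalues, for a suitable unitary `U`. -/
lemma exists_unitary_conjTranspose_mul_self_eq_diagonal {ι κ : Type*} [Fintype ι] [Fintype κ]
    [DecidableEq κ] (c : Matrix ι κ ℂ) :
    ∃ (U : Matrix κ κ ℂ) (d : κ → ℝ), Uᴴ * U = 1 ∧ U * Uᴴ = 1 ∧ (∀ l, 0 ≤ d l) ∧
      (c * U)ᴴ * (c * U) = diagonal (fun l => (d l : ℂ)) := by
  have hH : (cᴴ * c).IsHermitian := isHermitian_conjTranspose_mul_self c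
  refine ⟨hH.eigenvectorUnitary, hH.eigenvalues, Unitary.coe_star_mul_self _,
    Unitary.coe_mul_star_self _, (posSemidef_conjTranspose_mul_self c).eigenvalues_nonneg, ?_⟩
  have h := hH.conjStarAlgAut_star_eigenvectorUnitary
  rw [Unitary.conjStarAlgAut_star_apply] at h
  rw [conjTranspose_mul, ← star_eq_conjTranspose (hH.eigenvectorUnitary : Matrix κ κ ℂ)]
  rw [Matrix.mul_assoc, ← Matrix.mul_assoc cᴴ, ← Matrix.mul_assoc]
  exact h

/-- The squared Frobenius norm of a complex matrix is the trace of its Gram matrix. -/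
lemma trace_conjTranspose_mul_self_eq_sum_norm_sq {ι κ : Type*} [Fintype ι] [Fintype κ]
    (c : Matrix ι κ ℂ) : (cᴴ * c).trace = ((∑ i, ∑ j, ‖c i j‖ ^ 2 : ℝ) : ℂ) := by
  rw [Finset.sum_comm]
  simp [trace, mul_apply, Complex.conj_mul']

/-- An orthonormal family of vectors in `ℂ^ι` has at most `card ι` members. -/
lemma card_le_card_of_orthonormal {ι κ : Type*} [Fintype ι] [Fintype κ] [DecidableEq κ]
    (u : κ → ι → ℂ)
    (hu : ∀ l l', ∑ i, (starRingEnd ℂ) (u l i) * u l' i = if l = l' then 1 else 0) :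
    Fintype.card κ ≤ Fintype.card ι := by
  have h : (of u).map (starRingEnd ℂ) * (of u)ᵀ = 1 := by
    ext l l'
    simp [mul_apply, hu, one_apply]
  rw [← rank_one (R := ℂ) (n := κ), ← h]
  exact (rank_mul_le_left _ _).trans (rank_le_card_width _)

/-- Schmidt decomposition: every coefficient matrix `c` of a normalized pure
bipartite state can be written as `c i j = Σ_l √(p_l) · u_l(i) · v_l(j)` with `k ≤ min n m`,
`p_l ≥ 0`, `Σ_l p_l = 1`, and orthonormal families `u`, `v`. -/
theorem stmt13 (n m : ℕ) (c : Matrix (Fin n) (Fin m) ℂ)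
    (hc : ∑ i, ∑ j, ‖c i j‖ ^ 2 = 1) :
    ∃ (k : ℕ), k ≤ min n m ∧
      ∃ (p : Fin k → ℝ) (u : Fin k → Fin n → ℂ) (v : Fin k → Fin m → ℂ),
        (∀ l, 0 ≤ p l) ∧ (∑ l, p l = 1) ∧
        (∀ l l' : Fin k, ∑ i, (starRingEnd ℂ) (u l i) * u l' i = if l = l' then 1 else 0) ∧
        (∀ l l' : Fin k, ∑ j, (starRingEnd ℂ) (v l j) * v l' j = if l = l' then 1 else 0) ∧
        (∀ i j, c i j = ∑ l, ((Real.sqrt (p l) : ℝ) : ℂ) * u l i * v l j) := by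
  classical
  obtain ⟨U, d, hU, hU', hd, hB⟩ := exists_unitary_conjTranspose_mul_self_eq_diagonal c
  set B := c * U with hBdef
  have hcB : c = B * Uᴴ := by rw [hBdef, Matrix.mul_assoc, hU', Matrix.mul_one]
  have hgram (l l' : Fin m) :
      ∑ i, (starRingEnd ℂ) (B i l) * B i l' = if l = l' then (d l : ℂ) else 0 := by
    simpa [mul_apply, diagonal_apply] using congrFun (congrFun hB l) l'
  have hcol (l : Fin m) (hl : d l = 0) (i : Fin n) : B i l = 0 := by
    have h : ∑ i, ‖B i l‖ ^ 2 = 0 := by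
      have := hgram l l
      simp only [Complex.conj_mul', hl] at this
      exact_mod_cast (by simpa using this : ∑ i, (‖B i l‖ : ℂ) ^ 2 = 0)
    simpa using (Finset.sum_eq_zero_iff_of_nonneg fun i _ => sq_nonneg ‖B i l‖).1 h i
      (Finset.mem_univ i)
  have htr : ∑ l, d l = 1 := by
    have h : (cᴴ * c).trace = (Bᴴ * B).trace := by
      rw [hBdef, conjTranspose_mul, Matrix.mul_assoc, trace_mul_comm Uᴴ, Matrix.mul_assoc,
        Matrix.mul_assoc, hU', Matrix.mul_one]
    rw [trace_conjTranspose_mul_self_eq_sum_norm_sq, hc, hB, trace_diagonal] at h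
    exact_mod_cast h.symm
  let e := (Fintype.equivFin {l : Fin m // d l ≠ 0}).symm
  have hsum {M : Type} [AddCommMonoid M] (f : Fin m → M) (hf : ∀ l, d l = 0 → f l = 0) :
      ∑ l, f (e l) = ∑ l, f l := by
    rw [e.sum_comp (fun l => f l), ← Fintype.sum_subtype_add_sum_subtype (fun l => d l ≠ 0) f,
      Fintype.sum_eq_zero (fun l : {l // ¬ d l ≠ 0} => f l) fun l => hf l (not_not.1 l.2),
      add_zero]
  have hsqrt (l) : ((√(d (e l)) : ℝ) : ℂ) ≠ 0 :=
    Complex.ofReal_ne_zero.2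
      (Real.sqrt_pos.2 (lt_of_le_of_ne (hd _) (Ne.symm (e l).2))).ne'
  have hu (l l') : ∑ i, (starRingEnd ℂ) (B i (e l) / (√(d (e l)) : ℝ)) *
      (B i (e l') / (√(d (e l')) : ℝ)) = if l = l' then 1 else 0 := by
    simp only [map_div₀, Complex.conj_ofReal, div_mul_div_comm, ← Finset.sum_div, hgram,
      Subtype.coe_inj, e.injective.eq_iff]
    split_ifs with h
    · subst h
      rw [← Complex.ofReal_mul, Real.mul_self_sqrt (hd _)]
      exact div_self (Complex.ofReal_ne_zero.2 (e l).2)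
    · simp
  refine ⟨_, le_min ?_ ?_, fun l => d (e l), fun l i => B i (e l) / (√(d (e l)) : ℝ),
    fun l j => (starRingEnd ℂ) (U j (e l)), fun l => hd _, ?_, hu, fun l l' => ?_,
    fun i j => ?_⟩
  · simpa only [Fintype.card_fin] using card_le_card_of_orthonormal _ hu
  · simpa only [Fintype.card_fin] using Fintype.card_subtype_le (fun l : Fin m => d l ≠ 0)
  · rw [hsum d fun _ => id, htr]
  · have h := congrFun (congrFun hU (e l')) (e l)
    simp only [mul_apply, conjTranspose_apply, one_apply, Subtype.coe_inj,
      e.injective.eq_iff] at h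
    rw [← if_congr eq_comm rfl rfl, ← h]
    exact Finset.sum_congr rfl fun j _ => by rw [Complex.conj_conj, mul_comm]; rfl
  · simp only [mul_div_cancel₀ _ (hsqrt _)]
    rw [hsum (fun l => B i l * (starRingEnd ℂ) (U j l)) fun l hl => by rw [hcol l hl, zero_mul]]
    exact congrFun (congrFun hcB i) j
end

section
/- Wigner rotation for two perpendicular boosts: for all real v, w with |v| < 1 and |w| < 1, setting γ_v = 1/√(1−v²) and γ_w = 1/√(1−w²), there exists a real δ with cos δ = (γ_v + γ_w)/(1 + γ_v·γ_w) and a symmetric real 4×4 matrix B with Bᵀ·η·B = η and B₀₀ ≥ 1 (a pure boost) such that L_z(w)·L_x(v) = R_y(δ)·B, where R_y(δ) is the 4×4 matrix acting as the identity on the time coordinate and as the spatial rotation by angle δ about the y-axis, i.e. R_y(δ) has rows (1,0,0,0), (0, cos δ, 0, sin δ), (0,0,1,0), (0, −sin δ, 0, cos δ). -/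
open Matrix

noncomputable section

/-- The Minkowski metric matrix η = diag(1, −1, −1, −1). -/
def minkowski : Matrix (Fin 4) (Fin 4) ℝ := Matrix.diagonal ![1, -1, -1, -1]

/-- The relativistic γ-factor `γ(v) = 1/√(1−v²)`. -/
def gammaFac (v : ℝ) : ℝ := 1 / Real.sqrt (1 - v ^ 2)

/-- The Lorentz boost in the x-direction with velocity v. -/
def boostX (v : ℝ) : Matrix (Fin 4) (Fin 4) ℝ :=
  !![gammaFac v, -(gammaFac v * v), 0, 0;
     -(gammaFac v * v), gammaFac v, 0, 0;
     0, 0, 1, 0;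
     0, 0, 0, 1]

/-- The Lorentz boost in the z-direction with velocity w. -/
def boostZ (w : ℝ) : Matrix (Fin 4) (Fin 4) ℝ :=
  !![gammaFac w, 0, 0, -(gammaFac w * w);
     0, 1, 0, 0;
     0, 0, 1, 0;
     -(gammaFac w * w), 0, 0, gammaFac w]

/-- The spacetime rotation by angle δ about the y-axis. -/
def rotY (δ : ℝ) : Matrix (Fin 4) (Fin 4) ℝ :=
  !![1, 0, 0, 0;
     0, Real.cos δ, 0, Real.sin δ;
     0, 0, 1, 0;
     0, -Real.sin δ, 0, Real.cos δ]

theorem one_le_gammaFac {v : ℝ} (hv : |v| < 1) : 1 ≤ gammaFac v := by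
  have h : 0 < 1 - v ^ 2 := by
    have := (sq_lt_one_iff_abs_lt_one v).2 hv
    linarith
  rw [gammaFac, le_div_iff₀ (Real.sqrt_pos.2 h), one_mul, Real.sqrt_le_iff]
  exact ⟨zero_le_one, by linarith [sq_nonneg v]⟩

theorem gammaFac_sq_sub {v : ℝ} (hv : |v| < 1) :
    gammaFac v ^ 2 - (gammaFac v * v) ^ 2 = 1 := by
  have h : 0 < 1 - v ^ 2 := by
    have := (sq_lt_one_iff_abs_lt_one v).2 hv
    linarith
  rw [gammaFac, mul_pow, div_pow, Real.sq_sqrt h.le]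
  field_simp

theorem exists_cos_eq_sin_eq {c s : ℝ} (h : c ^ 2 + s ^ 2 = 1) :
    ∃ δ : ℝ, Real.cos δ = c ∧ Real.sin δ = s := by
  have hn : ‖(⟨c, s⟩ : ℂ)‖ = 1 := by
    rw [Complex.norm_def, Complex.normSq_mk, ← sq, ← sq, h, Real.sqrt_one]
  have h0 : (⟨c, s⟩ : ℂ) ≠ 0 := by
    rw [← norm_ne_zero_iff, hn]
    exact one_ne_zero
  refine ⟨Complex.arg ⟨c, s⟩, ?_, ?_⟩
  · rw [Complex.cos_arg h0, hn, div_one]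
  · rw [Complex.sin_arg, hn, div_one]

/-- The pure boost taking the unit time vector to `(t, x, 0, z)`, when `t ^ 2 - x ^ 2 - z ^ 2 = 1`. -/
def boostXZ (t x z : ℝ) : Matrix (Fin 4) (Fin 4) ℝ :=
  !![t, x, 0, z;
     x, 1 + x ^ 2 / (1 + t), 0, x * z / (1 + t);
     0, 0, 1, 0;
     z, x * z / (1 + t), 0, 1 + z ^ 2 / (1 + t)]

theorem boostXZ_transpose (t x z : ℝ) : (boostXZ t x z)ᵀ = boostXZ t x z := by
  ext i j
  fin_cases i <;> fin_cases j <;> simp [boostXZ]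

theorem boostXZ_lorentz {t x z : ℝ} (h : t ^ 2 - x ^ 2 - z ^ 2 = 1) (ht : 1 + t ≠ 0) :
    (boostXZ t x z)ᵀ * minkowski * boostXZ t x z = minkowski := by
  rw [boostXZ_transpose]
  ext i j
  fin_cases i <;> fin_cases j <;>
    simp [boostXZ, minkowski, Matrix.mul_apply, Fin.sum_univ_four, Matrix.vecMul_diagonal] <;>
    field_simp <;> grind

/-- Wigner rotation for two perpendicular boosts: for `|v| < 1`, `|w| < 1`
there are an angle δ with `cos δ = (γ_v + γ_w)/(1 + γ_v γ_w)` and a pure boost `B`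
(symmetric Lorentz transformation with `B₀₀ ≥ 1`) such that `L_z(w)·L_x(v) = R_y(δ)·B`. -/
theorem stmt17 (v w : ℝ) (hv : |v| < 1) (hw : |w| < 1) :
    ∃ (δ : ℝ) (B : Matrix (Fin 4) (Fin 4) ℝ),
      Real.cos δ = (gammaFac v + gammaFac w) / (1 + gammaFac v * gammaFac w) ∧
      Bᵀ = B ∧
      Bᵀ * minkowski * B = minkowski ∧
      1 ≤ B 0 0 ∧
      boostZ w * boostX v = rotY δ * B := by
  have hg := one_le_gammaFac hv
  have hh := one_le_gammaFac hw
  have hga := gammaFac_sq_sub hv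
  have hhb := gammaFac_sq_sub hw
  unfold boostX boostZ
  generalize gammaFac v * v = a at *
  generalize gammaFac w * w = b at *
  generalize gammaFac v = g at *
  generalize gammaFac w = h at *
  have hgh : 1 ≤ h * g := one_le_mul_of_one_le_of_one_le hh hg
  have hd : 1 + h * g ≠ 0 := by positivity
  have hd' : 1 + g * h ≠ 0 := by rwa [mul_comm g h]
  obtain ⟨δ, hc, hs⟩ : ∃ δ : ℝ, Real.cos δ = (g + h) / (1 + g * h) ∧
      Real.sin δ = -(a * b) / (1 + g * h) := by
    apply exists_cos_eq_sin_eq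
    field_simp
    grind
  refine ⟨δ, boostXZ (h * g) (-(h * a)) (-b), hc, boostXZ_transpose _ _ _,
    boostXZ_lorentz (by grind) hd, by simpa [boostXZ] using hgh, ?_⟩
  ext i j
  fin_cases i <;> fin_cases j <;>
    simp [boostXZ, rotY, hc, hs, Matrix.mul_apply, Fin.sum_univ_four] <;>
    field_simp <;> grind
end
end
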